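/- (Accuracy of the approximate meta-gradient.) Under bounded inputs and Lipschitz loss, for every probability measure μ on Z with ‖x‖ ≤ R μ-almost surely, every h ∈ ℝ^d and λ > 0, the discrepancy Δ_{Z_n}(h) = ∇L_{Z_n}(h) − ∇̂L_{Z_n}(h) = −λ( w_h(Z_n) − w^{(n+1)}_h(Z_n) ) between the exact meta-gradient (defined via the biased ERM w_h(Z_n)) and its approximation (defined via the last iterate w^{(n+1)} of Algorithm 1) satisfies E_{Z_n∼μ^n} ‖Δ_{Z_n}(h)‖² ≤ 4 R² L² (log n + 1)/n. -/

import Mathlib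

open MeasureTheory Real
open scoped InnerProductSpace

noncomputable section

abbrev Vec (d : ℕ) := EuclideanSpace ℝ (Fin d)
abbrev Pt (d : ℕ) := Vec d × ℝ

/-- Empirical risk of `w` on the dataset `S`. -/
def empRisk {d n : ℕ} (ℓ : ℝ → ℝ → ℝ) (S : Fin n → Pt d) (w : Vec d) : ℝ :=
  (n : ℝ)⁻¹ * ∑ k, ℓ (⟪(S k).1, w⟫_ℝ) ((S k).2)

/-- Biased regularized empirical risk. -/
def regRisk {d n : ℕ} (ℓ : ℝ → ℝ → ℝ) (lam : ℝ) (S : Fin n → Pt d)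
    (h w : Vec d) : ℝ :=
  empRisk ℓ S w + lam / 2 * ‖w - h‖ ^ 2

/-- True risk of `w` under the task distribution `μ`. -/
def trueRisk {d : ℕ} (ℓ : ℝ → ℝ → ℝ) (μ : Measure (Pt d)) (w : Vec d) : ℝ :=
  ∫ z, ℓ (⟪z.1, w⟫_ℝ) (z.2) ∂μ

/-- `u` is a subgradient of `f : ℝ → ℝ` at `a`. -/
def IsSubgradAt (f : ℝ → ℝ) (u a : ℝ) : Prop :=
  ∀ b, f a + u * (b - a) ≤ f b

/-!
In the coordinate `v = λ (h - w)`, Algorithm 1 evaluates each new subgradient `gᵢ` at the average of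
the previous ones, and the biased ERM becomes a fixed point `c` of the mean subdifferential; the
discrepancy has norm `‖∑ᵢ (gᵢ - c)‖ / n`. As the data are exchangeable, it suffices to bound the
average of `‖∑ᵢ (gᵢ - c)‖²` over the orders in which a fixed dataset is visited.

If the subgradients depend only on the visits made so far, monotonicity of the subdifferentials
together with the variance of sampling without replacement gives a bound `O(n L² R²)`. The
subgradients of the algorithm may depend on the whole dataset, but monotonicity keeps two paths with
the same order of visits within `2 L R √n` of each other, which suffices for large `n`. For small
`n` the logarithm absorbs the factor `√n` lost by a summation by parts.
-/

section AveragedPaths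

variable {E ι : Type*} [NormedAddCommGroup E]

/-- Partial sums of `g` centred at `c`. For the subgradients `g` of a run of length `n` and the mean
fixed point `c`, the last one is `n` times the discrepancy to be bounded. -/
def centredSum (c : E) (g : ℕ → E) (k : ℕ) : E := ∑ i ∈ Finset.range k, (g i - c)

@[simp]
theorem centredSum_zero (c : E) (g : ℕ → E) : centredSum c g 0 = 0 := Finset.sum_range_zero _

theorem centredSum_succ (c : E) (g : ℕ → E) (k : ℕ) :
    centredSum c g (k + 1) = centredSum c g k + (g k - c) :=
  Finset.sum_range_succ _ _

variable [InnerProductSpace ℝ E]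

/-- A family of set-valued operators, each of them dissipative (minus a monotone operator) and
with values in the ball of radius `B`. -/
structure IsBoundedDissipative (T : ι → E → Set E) (B : ℝ) : Prop where
  inner_nonpos : ∀ {i v v' g g'}, g ∈ T i v → g' ∈ T i v' → ⟪g - g', v - v'⟫_ℝ ≤ 0
  norm_le : ∀ {i v g}, g ∈ T i v → ‖g‖ ≤ B

/-- `g` visits `n` operators in the order `s`, evaluating each one at the average of the values
collected so far; the first one is evaluated at `0`. This is the abstract form of stochastic
subgradient descent with step sizes `1 / (k λ)`. -/
def IsAveragedPath (T : ι → E → Set E) (n : ℕ) (s : ℕ → ι) (g : ℕ → E) : Prop :=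
  ∀ k < n, g k ∈ T (s k) ((k : ℝ)⁻¹ • ∑ i ∈ Finset.range k, g i)

/-- `c` is a fixed point of the average of the operators `T i`, with `gs i` the values at `c`
whose mean is `c`. This is the abstract form of the biased empirical risk minimizer. -/
structure IsMeanFixedPoint [Fintype ι] (T : ι → E → Set E) (c : E) (gs : ι → E) : Prop where
  mem : ∀ i, gs i ∈ T i c
  sum_sub_eq_zero : ∑ i, (gs i - c) = 0

theorem centredSum_eq_smul (c : E) (g : ℕ → E) (k : ℕ) :
    centredSum c g k = (k : ℝ) • ((k : ℝ)⁻¹ • ∑ i ∈ Finset.range k, g i - c) := by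
  rcases eq_or_ne k 0 with rfl | hk
  · simp
  · rw [smul_sub, smul_inv_smul₀ (Nat.cast_ne_zero.2 hk), centredSum, Finset.sum_sub_distrib,
      Finset.sum_const, Finset.card_range, Nat.cast_smul_eq_nsmul]

namespace IsBoundedDissipative

variable {T : ι → E → Set E} {B : ℝ} {n k : ℕ} {s : ℕ → ι} {g g' : ℕ → E} {c : E} {gs : ι → E}

theorem inner_centredSum_nonpos (hT : IsBoundedDissipative T B) (hg : IsAveragedPath T n s g)
    (hgs : ∀ i, gs i ∈ T i c) (hk : k < n) :
    ⟪centredSum c g k, g k - gs (s k)⟫_ℝ ≤ 0 := by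
  rw [centredSum_eq_smul, real_inner_smul_left, real_inner_comm]
  exact mul_nonpos_of_nonneg_of_nonpos k.cast_nonneg (hT.inner_nonpos (hg k hk) (hgs (s k)))

theorem norm_path_sub_le (hT : IsBoundedDissipative T B) (hg : IsAveragedPath T n s g)
    (hk : k < n) : ‖g k - c‖ ≤ B + ‖c‖ :=
  (norm_sub_le _ _).trans (add_le_add_left (hT.norm_le (hg k hk)) _)

theorem sq_norm_centredSum_succ_le (hT : IsBoundedDissipative T B) (hg : IsAveragedPath T n s g)
    (hgs : ∀ i, gs i ∈ T i c) (hk : k < n) :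
    ‖centredSum c g (k + 1)‖ ^ 2
      ≤ ‖centredSum c g k‖ ^ 2 + 2 * ⟪centredSum c g k, gs (s k) - c⟫_ℝ + (B + ‖c‖) ^ 2 := by
  have hsplit : ⟪centredSum c g k, g k - c⟫_ℝ
      = ⟪centredSum c g k, g k - gs (s k)⟫_ℝ + ⟪centredSum c g k, gs (s k) - c⟫_ℝ := by
    rw [← inner_add_right, sub_add_sub_cancel]
  have hsq : ‖g k - c‖ ^ 2 ≤ (B + ‖c‖) ^ 2 := by gcongr; exact hT.norm_path_sub_le hg hk
  rw [centredSum_succ, norm_add_sq_real]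
  linarith [hT.inner_centredSum_nonpos hg hgs hk]

theorem sq_norm_centredSum_le (hT : IsBoundedDissipative T B) (hg : IsAveragedPath T n s g)
    (hgs : ∀ i, gs i ∈ T i c) (hk : k ≤ n) :
    ‖centredSum c g k‖ ^ 2 ≤ k * (B + ‖c‖) ^ 2
      + 2 * ∑ j ∈ Finset.range k, ⟪centredSum c g j, gs (s j) - c⟫_ℝ := by
  induction k with
  | zero => simp
  | succ k ih =>
    rw [Finset.sum_range_succ]
    push_cast
    linarith [ih (by omega), hT.sq_norm_centredSum_succ_le hg hgs hk]

theorem inner_centredSum_sub_nonpos (hT : IsBoundedDissipative T B)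
    (hg : IsAveragedPath T n s g) (hg' : IsAveragedPath T n s g') (hk : k < n) :
    ⟪centredSum c g k - centredSum c g' k, g k - g' k⟫_ℝ ≤ 0 := by
  rw [centredSum_eq_smul, centredSum_eq_smul, ← smul_sub, sub_sub_sub_cancel_right,
    real_inner_smul_left, real_inner_comm]
  exact mul_nonpos_of_nonneg_of_nonpos k.cast_nonneg (hT.inner_nonpos (hg k hk) (hg' k hk))

theorem sq_norm_centredSum_sub_le (hT : IsBoundedDissipative T B) (hg : IsAveragedPath T n s g)
    (hg' : IsAveragedPath T n s g') (hk : k ≤ n) :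
    ‖centredSum c g k - centredSum c g' k‖ ^ 2 ≤ k * (2 * B) ^ 2 := by
  induction k with
  | zero => simp
  | succ k ih =>
    have hsq : ‖g k - g' k‖ ^ 2 ≤ (2 * B) ^ 2 := by
      gcongr
      linarith [norm_sub_le (g k) (g' k), hT.norm_le (hg k hk), hT.norm_le (hg' k hk)]
    have hstep : centredSum c g (k + 1) - centredSum c g' (k + 1)
        = (centredSum c g k - centredSum c g' k) + (g k - g' k) := by
      rw [centredSum_succ, centredSum_succ]; abel
    rw [hstep, norm_add_sq_real]
    push_cast
    linarith [ih (by omega), hT.inner_centredSum_sub_nonpos (c := c) hg hg' hk]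

end IsBoundedDissipative

namespace IsMeanFixedPoint

variable [Fintype ι] {T : ι → E → Set E} {B : ℝ} {c c' : E} {gs gs' : ι → E}

theorem card_smul_eq_sum (h : IsMeanFixedPoint T c gs) :
    (Fintype.card ι : ℝ) • c = ∑ i, gs i := by
  have := h.sum_sub_eq_zero
  rwa [Finset.sum_sub_distrib, Finset.sum_const, Finset.card_univ, ← Nat.cast_smul_eq_nsmul ℝ,
    sub_eq_zero, eq_comm] at this

theorem eq [Nonempty ι] (hT : IsBoundedDissipative T B) (h : IsMeanFixedPoint T c gs)
    (h' : IsMeanFixedPoint T c' gs') : c = c' := by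
  have hsum : ∑ i, ⟪gs i - gs' i, c - c'⟫_ℝ = Fintype.card ι * ‖c - c'‖ ^ 2 := by
    rw [← sum_inner, Finset.sum_sub_distrib, ← h.card_smul_eq_sum, ← h'.card_smul_eq_sum,
      ← smul_sub, real_inner_smul_left, real_inner_self_eq_norm_sq]
  have hle : Fintype.card ι * ‖c - c'‖ ^ 2 ≤ 0 :=
    hsum ▸ Finset.sum_nonpos fun i _ => hT.inner_nonpos (h.mem i) (h'.mem i)
  have hcard : (0 : ℝ) < Fintype.card ι := Nat.cast_pos.2 Fintype.card_pos
  exact sub_eq_zero.1 (norm_eq_zero.1 (pow_eq_zero_iff two_ne_zero |>.1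
    (le_antisymm (nonpos_of_mul_nonpos_right hle hcard) (sq_nonneg _))))

theorem sum_sq_norm_sub_le (hT : IsBoundedDissipative T B) (h : IsMeanFixedPoint T c gs) :
    ∑ i, ‖gs i - c‖ ^ 2 ≤ Fintype.card ι * (B ^ 2 - ‖c‖ ^ 2) := by
  have hcross : ∑ i, ⟪gs i, c⟫_ℝ = Fintype.card ι * ‖c‖ ^ 2 := by
    rw [← sum_inner, ← h.card_smul_eq_sum, real_inner_smul_left, real_inner_self_eq_norm_sq]
  have hsq : ∑ i, ‖gs i‖ ^ 2 ≤ Fintype.card ι * B ^ 2 := by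
    rw [← nsmul_eq_mul, ← Finset.card_univ]
    exact Finset.sum_le_card_nsmul _ _ _ fun i _ => by gcongr; exact hT.norm_le (h.mem i)
  simp only [norm_sub_sq_real, Finset.sum_add_distrib, Finset.sum_sub_distrib, ← Finset.mul_sum,
    hcross, Finset.sum_const, Finset.card_univ, nsmul_eq_mul]
  linarith

theorem norm_le [Nonempty ι] (hT : IsBoundedDissipative T B) (h : IsMeanFixedPoint T c gs) :
    ‖c‖ ≤ B := by
  have hle := h.sum_sq_norm_sub_le hT
  have hB : 0 ≤ B := (norm_nonneg _).trans (hT.norm_le (h.mem (Classical.arbitrary ι)))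
  have hcard : (0 : ℝ) < Fintype.card ι := Nat.cast_pos.2 Fintype.card_pos
  have hnonneg : 0 ≤ B ^ 2 - ‖c‖ ^ 2 := nonneg_of_mul_nonneg_right
    ((Finset.sum_nonneg fun i _ => sq_nonneg _).trans hle) hcard
  exact le_of_sq_le_sq (by linarith) hB

end IsMeanFixedPoint

end AveragedPaths

section RandomOrder

open scoped BigOperators

theorem abs_expect_inner_le {α E : Type*} [SeminormedAddCommGroup E] [InnerProductSpace ℝ E]
    (s : Finset α) (X Y : α → E) :
    |𝔼 i ∈ s, ⟪X i, Y i⟫_ℝ| ≤ √(𝔼 i ∈ s, ‖X i‖ ^ 2) * √(𝔼 i ∈ s, ‖Y i‖ ^ 2) := by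
  rw [← Real.sqrt_mul (Finset.expect_nonneg fun i _ => sq_nonneg _)]
  calc |𝔼 i ∈ s, ⟪X i, Y i⟫_ℝ| ≤ 𝔼 i ∈ s, |⟪X i, Y i⟫_ℝ| := Finset.abs_expect_le _ _
    _ ≤ 𝔼 i ∈ s, ‖X i‖ * ‖Y i‖ := Finset.expect_le_expect fun i _ => abs_real_inner_le_norm _ _
    _ ≤ √((𝔼 i ∈ s, ‖X i‖ ^ 2) * 𝔼 i ∈ s, ‖Y i‖ ^ 2) :=
        Real.le_sqrt_of_sq_le (Finset.expect_mul_sq_le_sq_mul_sq _ _ _)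

theorem expect_perm_apply {α M : Type*} [Fintype α] [DecidableEq α] [AddCommMonoid M]
    [Module ℚ≥0 M] (φ : α → M) (j : α) : 𝔼 σ : Equiv.Perm α, φ (σ j) = 𝔼 i, φ i := by
  have : Nonempty α := ⟨j⟩
  have hj (l : α) : 𝔼 σ : Equiv.Perm α, φ (σ l) = 𝔼 σ : Equiv.Perm α, φ (σ j) :=
    Fintype.expect_equiv (Equiv.mulRight (Equiv.swap j l)) _ _ fun σ => by simp
  have hl (σ : Equiv.Perm α) : 𝔼 l, φ (σ l) = 𝔼 i, φ i := Fintype.expect_equiv σ _ _ fun _ => rfl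
  calc 𝔼 σ : Equiv.Perm α, φ (σ j) = 𝔼 l, 𝔼 σ : Equiv.Perm α, φ (σ l) := by
        simp only [hj, Fintype.expect_const]
    _ = 𝔼 i, φ i := by rw [Finset.expect_comm]; simp only [hl, Fintype.expect_const]

variable {n k : ℕ} [NeZero n]

/-- The item visited at time `k` when `n` items are visited in the order `σ`. Times start at `0`
and are read modulo `n`, so that paths are sequences indexed by `ℕ`. -/
def visit (σ : Equiv.Perm (Fin n)) (k : ℕ) : Fin n := σ (Fin.ofNat n k)

/-- `Z`, a function of the order of visits, depends only on the items visited before time `k`;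
this plays the role of measurability with respect to the past. -/
def DeterminedBefore {X : Type*} (k : ℕ) (Z : Equiv.Perm (Fin n) → X) : Prop :=
  ∀ ⦃σ τ⦄, (∀ i < k, visit σ i = visit τ i) → Z σ = Z τ

/-- Sum of the values of `a` at the first `k` visited items, that is, of a sample drawn without
replacement when `σ` is random. -/
def visitSum {E : Type*} [AddCommMonoid E] (a : Fin n → E) (σ : Equiv.Perm (Fin n)) (k : ℕ) : E :=
  ∑ i ∈ Finset.range k, a (visit σ i)

theorem visitSum_self {E : Type*} [AddCommMonoid E] (a : Fin n → E) (σ : Equiv.Perm (Fin n)) :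
    visitSum a σ n = ∑ i, a i := by
  rw [visitSum, Finset.sum_range, ← Equiv.sum_comp σ a]
  simp [visit]

theorem determinedBefore_visitSum {E : Type*} [AddCommMonoid E] (a : Fin n → E) (k : ℕ) :
    DeterminedBefore k fun σ => visitSum a σ k :=
  fun _ _ h => Finset.sum_congr rfl fun i hi => by rw [h i (Finset.mem_range.1 hi)]

theorem visit_mul_swap_of_lt {l i : ℕ} (σ : Equiv.Perm (Fin n)) (hkl : k ≤ l) (hl : l < n)
    (hi : i < k) : visit (σ * Equiv.swap (Fin.ofNat n k) (Fin.ofNat n l)) i = visit σ i := by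
  have hne {m : ℕ} (him : i < m) (hm : m < n) : Fin.ofNat n i ≠ Fin.ofNat n m := by
    simp only [ne_eq, Fin.ext_iff, Fin.val_ofNat]
    rw [Nat.mod_eq_of_lt (him.trans hm), Nat.mod_eq_of_lt hm]
    exact him.ne
  rw [visit, Equiv.Perm.mul_apply,
    Equiv.swap_apply_of_ne_of_ne (hne hi (hkl.trans_lt hl)) (hne (hi.trans_le hkl) hl), visit]

variable {E : Type*} [NormedAddCommGroup E] [InnerProductSpace ℝ E] {a : Fin n → E}

/-- Given the first `k` visits, all remaining items are equally likely to come next. -/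
theorem DeterminedBefore.expect_inner_visit {Z : Equiv.Perm (Fin n) → E}
    (hZ : DeterminedBefore k Z) (ha : ∑ i, a i = 0) (hk : k < n) :
    ((n : ℝ) - k) * 𝔼 σ, ⟪Z σ, a (visit σ k)⟫_ℝ = -𝔼 σ, ⟪Z σ, visitSum a σ k⟫_ℝ := by
  have hswap : ∀ l ∈ Finset.Ico k n,
      𝔼 σ, ⟪Z σ, a (visit σ l)⟫_ℝ = 𝔼 σ, ⟪Z σ, a (visit σ k)⟫_ℝ := by
    intro l hl
    obtain ⟨hkl, hln⟩ := Finset.mem_Ico.1 hl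
    refine Fintype.expect_equiv
      (Equiv.mulRight (Equiv.swap (Fin.ofNat n k) (Fin.ofNat n l))) _ _ fun σ => ?_
    rw [Equiv.coe_mulRight, hZ fun i hi => visit_mul_swap_of_lt σ hkl hln hi]
    simp [visit]
  have hrest (σ : Equiv.Perm (Fin n)) :
      ∑ l ∈ Finset.Ico k n, a (visit σ l) = -visitSum a σ k := by
    rw [Finset.sum_Ico_eq_sub _ hk.le, ← visitSum, ← visitSum, visitSum_self, ha, zero_sub]
  calc ((n : ℝ) - k) * 𝔼 σ, ⟪Z σ, a (visit σ k)⟫_ℝ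
      = ∑ l ∈ Finset.Ico k n, 𝔼 σ, ⟪Z σ, a (visit σ l)⟫_ℝ := by
        rw [Finset.sum_congr rfl hswap, Finset.sum_const, Nat.card_Ico, nsmul_eq_mul,
          Nat.cast_sub hk.le]
    _ = -𝔼 σ, ⟪Z σ, visitSum a σ k⟫_ℝ := by
        simp only [← Finset.expect_sum_comm, ← inner_sum, hrest, inner_neg_right,
          Finset.expect_neg_distrib]

theorem expect_sq_norm_visitSum (ha : ∑ i, a i = 0) (hk : k ≤ n) :
    ((n : ℝ) - 1) * 𝔼 σ, ‖visitSum a σ k‖ ^ 2 = k * (n - k) * 𝔼 i, ‖a i‖ ^ 2 := by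
  induction k with
  | zero => simp [visitSum]
  | succ k ih =>
    have hprev := ih (by omega)
    have hcross := (determinedBefore_visitSum a k).expect_inner_visit ha hk
    simp only [real_inner_self_eq_norm_sq] at hcross
    have hstep : 𝔼 σ, ‖visitSum a σ (k + 1)‖ ^ 2 = 𝔼 σ, ‖visitSum a σ k‖ ^ 2
        + 2 * 𝔼 σ, ⟪visitSum a σ k, a (visit σ k)⟫_ℝ + 𝔼 i, ‖a i‖ ^ 2 := by
      rw [← expect_perm_apply (fun i => ‖a i‖ ^ 2) (Fin.ofNat n k), Finset.mul_expect,
        ← Finset.expect_add_distrib, ← Finset.expect_add_distrib]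
      refine Finset.expect_congr rfl fun σ _ => ?_
      rw [visitSum, Finset.sum_range_succ, norm_add_sq_real]
      rfl
    have hnk : (n : ℝ) - k ≠ 0 := sub_ne_zero.2 (Nat.cast_injective.ne (by omega))
    rw [hstep, ← mul_right_inj' hnk]
    push_cast
    linear_combination ((n : ℝ) - k - 2) * hprev + 2 * ((n : ℝ) - 1) * hcross

end RandomOrder

section RandomOrderPaths

open scoped BigOperators

theorem add_mul_sqrt_sq_sub_sq_le {B γ : ℝ} (hγ : 0 ≤ γ) (hγB : γ ≤ B) :
    (B + γ) * √(B ^ 2 - γ ^ 2) ≤ 4 / 3 * B ^ 2 := by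
  have hpoly : (B + γ) ^ 2 * (B ^ 2 - γ ^ 2) ≤ (4 / 3 * B ^ 2) ^ 2 := by
    have hsq : 0 ≤ (2 * γ - B) ^ 2 * (4 * γ ^ 2 + 12 * γ * B + 11 * B ^ 2) :=
      mul_nonneg (sq_nonneg _) (by nlinarith)
    nlinarith [sq_nonneg (B ^ 2)]
  refine le_of_sq_le_sq ?_ (by positivity)
  rwa [mul_pow, Real.sq_sqrt (by nlinarith)]

theorem sum_inner_sum_range_add {E : Type*} [SeminormedAddCommGroup E] [InnerProductSpace ℝ E]
    (f a : ℕ → E) (n : ℕ) :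
    ∑ j ∈ Finset.range n, ⟪∑ i ∈ Finset.range j, f i, a j⟫_ℝ
        + ∑ j ∈ Finset.range n, ⟪f j, ∑ i ∈ Finset.range (j + 1), a i⟫_ℝ
      = ⟪∑ i ∈ Finset.range n, f i, ∑ i ∈ Finset.range n, a i⟫_ℝ := by
  induction n with
  | zero => simp
  | succ n ih =>
    simp only [Finset.sum_range_succ, inner_add_left, inner_add_right] at ih ⊢
    linarith

variable {E : Type*} [NormedAddCommGroup E] [InnerProductSpace ℝ E] {n k : ℕ} [NeZero n]
  {T : Fin n → E → Set E} {B : ℝ} {c : E} {gs : Fin n → E} {g : Equiv.Perm (Fin n) → ℕ → E}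

namespace IsMeanFixedPoint

theorem sum_inner_centredSum (h : IsMeanFixedPoint T c gs) (σ : Equiv.Perm (Fin n)) (g : ℕ → E) :
    ∑ j ∈ Finset.range n, ⟪centredSum c g j, gs (visit σ j) - c⟫_ℝ
      = -∑ j ∈ Finset.range (n - 1), ⟪g j - c, visitSum (fun i => gs i - c) σ (j + 1)⟫_ℝ := by
  have hn : n - 1 + 1 = n := Nat.sub_add_cancel NeZero.one_le
  have hself : visitSum (fun i => gs i - c) σ n = 0 := by rw [visitSum_self, h.sum_sub_eq_zero]
  have hparts := sum_inner_sum_range_add (fun j => g j - c) (fun j => gs (visit σ j) - c) n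
  have hlast := Finset.sum_range_succ
    (fun j => ⟪g j - c, visitSum (fun i => gs i - c) σ (j + 1)⟫_ℝ) (n - 1)
  simp only [hn, hself, inner_zero_right, add_zero] at hlast
  simp only [visitSum, centredSum] at hparts hself hlast ⊢
  rw [hself, inner_zero_right, hlast] at hparts
  exact eq_neg_of_add_eq_zero_left hparts

theorem sqrt_mul_sqrt_expect_sq_norm_visitSum_le (hT : IsBoundedDissipative T B)
    (h : IsMeanFixedPoint T c gs) (hk : k ≤ n) :
    √((n : ℝ) - 1) * √(𝔼 σ, ‖visitSum (fun i => gs i - c) σ k‖ ^ 2)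
      ≤ √(k * (n - k)) * √(B ^ 2 - ‖c‖ ^ 2) := by
  have hkn : (0 : ℝ) ≤ k * (n - k) :=
    mul_nonneg k.cast_nonneg (sub_nonneg.2 (Nat.cast_le.2 hk))
  have hmean : 𝔼 i, ‖gs i - c‖ ^ 2 ≤ B ^ 2 - ‖c‖ ^ 2 := by
    have hn : (0 : ℝ) < n := Nat.cast_pos.2 (NeZero.pos n)
    have hsum := h.sum_sq_norm_sub_le hT
    rw [Fintype.card_fin] at hsum
    rwa [Fintype.expect_eq_sum_div_card, Fintype.card_fin, div_le_iff₀' hn]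
  rw [← Real.sqrt_mul (sub_nonneg.2 (Nat.one_le_cast.2 NeZero.one_le)), ← Real.sqrt_mul hkn,
    expect_sq_norm_visitSum h.sum_sub_eq_zero hk]
  gcongr

end IsMeanFixedPoint

namespace IsBoundedDissipative

theorem expect_sq_norm_centredSum_le (hT : IsBoundedDissipative T B)
    (hgs : ∀ i, gs i ∈ T i c) (hg : ∀ σ, IsAveragedPath T n (visit σ) (g σ)) (hk : k ≤ n) :
    𝔼 σ, ‖centredSum c (g σ) k‖ ^ 2 ≤ k * (B + ‖c‖) ^ 2
      + 2 * ∑ j ∈ Finset.range k, 𝔼 σ, ⟪centredSum c (g σ) j, gs (visit σ j) - c⟫_ℝ := by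
  calc 𝔼 σ, ‖centredSum c (g σ) k‖ ^ 2 ≤ 𝔼 σ, (k * (B + ‖c‖) ^ 2
        + 2 * ∑ j ∈ Finset.range k, ⟪centredSum c (g σ) j, gs (visit σ j) - c⟫_ℝ) :=
        Finset.expect_le_expect fun σ _ => hT.sq_norm_centredSum_le (hg σ) hgs hk
    _ = _ := by
        rw [Finset.expect_add_distrib, Fintype.expect_const, ← Finset.mul_expect,
          Finset.expect_sum_comm]

theorem neg_expect_inner_visitSum_le (hT : IsBoundedDissipative T B)
    (h : IsMeanFixedPoint T c gs) (hg : ∀ σ, IsAveragedPath T n (visit σ) (g σ)) {j : ℕ}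
    (hj : j < n) :
    √((n : ℝ) - 1) * -𝔼 σ, ⟪g σ j - c, visitSum (fun i => gs i - c) σ (j + 1)⟫_ℝ
      ≤ (B + ‖c‖) * (n / 2 * √(B ^ 2 - ‖c‖ ^ 2)) := by
  have hstep : √(𝔼 σ, ‖g σ j - c‖ ^ 2) ≤ B + ‖c‖ := by
    have hB : 0 ≤ B + ‖c‖ := (norm_nonneg _).trans (hT.norm_path_sub_le (c := c) (hg 1) hj)
    refine Real.sqrt_le_iff.2 ⟨hB, Finset.expect_le Finset.univ_nonempty fun σ _ => ?_⟩
    gcongr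
    exact hT.norm_path_sub_le (hg σ) hj
  have hsqrt : √(((j + 1 : ℕ) : ℝ) * (n - (j + 1 : ℕ))) ≤ n / 2 :=
    Real.sqrt_le_iff.2 ⟨by positivity, by linarith [sq_nonneg (2 * ((j + 1 : ℕ) : ℝ) - n)]⟩
  have hinner := abs_expect_inner_le Finset.univ (fun σ => g σ j - c)
    (fun σ => visitSum (fun i => gs i - c) σ (j + 1))
  have hvisit := (h.sqrt_mul_sqrt_expect_sq_norm_visitSum_le hT (k := j + 1) hj).trans
    (mul_le_mul_of_nonneg_right hsqrt (Real.sqrt_nonneg _))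
  calc _ ≤ √((n : ℝ) - 1) * ((B + ‖c‖)
          * √(𝔼 σ, ‖visitSum (fun i => gs i - c) σ (j + 1)‖ ^ 2)) := by
        gcongr
        exact (neg_le_abs _).trans (hinner.trans (by gcongr))
    _ = (B + ‖c‖) * (√((n : ℝ) - 1)
          * √(𝔼 σ, ‖visitSum (fun i => gs i - c) σ (j + 1)‖ ^ 2)) := by ring
    _ ≤ _ := mul_le_mul_of_nonneg_left hvisit ((Real.sqrt_nonneg _).trans hstep)

theorem sum_expect_inner_centredSum_le (hT : IsBoundedDissipative T B)
    (h : IsMeanFixedPoint T c gs) (hg : ∀ σ, IsAveragedPath T n (visit σ) (g σ)) :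
    ∑ j ∈ Finset.range n, 𝔼 σ, ⟪centredSum c (g σ) j, gs (visit σ j) - c⟫_ℝ
      ≤ √((n : ℝ) - 1) * ((B + ‖c‖) * (n / 2 * √(B ^ 2 - ‖c‖ ^ 2))) := by
  have hparts : ∑ j ∈ Finset.range n, 𝔼 σ, ⟪centredSum c (g σ) j, gs (visit σ j) - c⟫_ℝ
      = ∑ j ∈ Finset.range (n - 1),
        -𝔼 σ, ⟪g σ j - c, visitSum (fun i => gs i - c) σ (j + 1)⟫_ℝ := by
    simp only [← Finset.expect_sum_comm, ← Finset.expect_neg_distrib, Finset.sum_neg_distrib,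
      h.sum_inner_centredSum]
  have hn : ((n - 1 : ℕ) : ℝ) = n - 1 := by rw [Nat.cast_sub NeZero.one_le, Nat.cast_one]
  rw [hparts, ← hn]
  rcases Nat.eq_zero_or_pos (n - 1) with h0 | h0
  · simp [h0]
  have hs : 0 < √((n - 1 : ℕ) : ℝ) := Real.sqrt_pos.2 (Nat.cast_pos.2 h0)
  refine le_of_mul_le_mul_left ?_ hs
  rw [← mul_assoc, Real.mul_self_sqrt (Nat.cast_nonneg _), Finset.mul_sum, ← nsmul_eq_mul]
  refine (Finset.sum_le_card_nsmul _ _ _ fun j hj => ?_).trans_eq (by rw [Finset.card_range])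
  rw [hn]
  exact hT.neg_expect_inner_visitSum_le h hg ((Finset.mem_range.1 hj).trans_le (Nat.sub_le n 1))

/-- The path may depend on the whole order of visits: summation by parts moves the randomness from
the path to the order, where sampling without replacement controls it. -/
theorem expect_sq_norm_centredSum_self_le (hT : IsBoundedDissipative T B)
    (h : IsMeanFixedPoint T c gs) (hg : ∀ σ, IsAveragedPath T n (visit σ) (g σ)) :
    𝔼 σ, ‖centredSum c (g σ) n‖ ^ 2 ≤ n * (4 + 4 / 3 * √((n : ℝ) - 1)) * B ^ 2 := by
  have hγ : ‖c‖ ≤ B := h.norm_le hT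
  have hB : 0 ≤ B := (norm_nonneg c).trans hγ
  have hfirst : (n : ℝ) * (B + ‖c‖) ^ 2 ≤ n * (2 * B) ^ 2 := by
    gcongr
    linarith
  have hsecond : √((n : ℝ) - 1) * n * ((B + ‖c‖) * √(B ^ 2 - ‖c‖ ^ 2))
      ≤ √((n : ℝ) - 1) * n * (4 / 3 * B ^ 2) :=
    mul_le_mul_of_nonneg_left (add_mul_sqrt_sq_sub_sq_le (norm_nonneg c) hγ) (by positivity)
  linarith [hT.expect_sq_norm_centredSum_le h.mem hg le_rfl,
    hT.sum_expect_inner_centredSum_le h hg]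

end IsBoundedDissipative

end RandomOrderPaths

section PredictablePaths

open scoped BigOperators

/-- One telescoping step: with `s = √n` and `a = √(n - j)`, `b = √(n - j - 1)`, the quantity
`4 s³ / 3 - 2 s² r + 2 r³ / 3` grows by at least `j / a` when `r` drops from `a` to `b`. -/
theorem sub_div_le_telescope {s a b : ℝ} (ha : 0 < a) (hb : 0 ≤ b) (hab : a ^ 2 = b ^ 2 + 1) :
    (s ^ 2 - a ^ 2) / a
      ≤ (2 * s ^ 2 * a - 2 / 3 * a ^ 3) - (2 * s ^ 2 * b - 2 / 3 * b ^ 3) := by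
  have hdiff : (a - b) * (a + b) = 1 := by linarith
  have hkey : 0 ≤ (a - b) ^ 2 * (s ^ 2 + a * (a + 2 * b) / 3) := by positivity
  rw [div_le_iff₀ ha]
  linear_combination hkey - (s ^ 2 - a ^ 2) * hdiff

theorem sum_div_sqrt_sub_le_sub {n k : ℕ} (hk : k ≤ n) :
    ∑ j ∈ Finset.range k, (j : ℝ) / √((n : ℝ) - j)
      ≤ (2 * n * √n - 2 / 3 * √n ^ 3)
        - (2 * n * √((n : ℝ) - k) - 2 / 3 * √((n : ℝ) - k) ^ 3) := by
  induction k with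
  | zero => simp
  | succ k ih =>
    have hkn : ((k + 1 : ℕ) : ℝ) ≤ n := Nat.cast_le.2 hk
    push_cast at hkn ⊢
    have hn : √(n : ℝ) ^ 2 = n := Real.sq_sqrt n.cast_nonneg
    have ha : √((n : ℝ) - k) ^ 2 = n - k := Real.sq_sqrt (by linarith)
    have hb : √((n : ℝ) - (k + 1)) ^ 2 = n - (k + 1) := Real.sq_sqrt (by linarith)
    have hstep := sub_div_le_telescope (s := √n) (a := √((n : ℝ) - k))
      (Real.sqrt_pos.2 (by linarith)) (Real.sqrt_nonneg ((n : ℝ) - (k + 1))) (by linarith)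
    rw [hn, ha, sub_sub_cancel] at hstep
    rw [Finset.sum_range_succ]
    linarith [ih (by omega)]

theorem sum_div_sqrt_sub_le {n k : ℕ} (hk : k ≤ n) :
    ∑ j ∈ Finset.range k, (j : ℝ) / √((n : ℝ) - j) ≤ 4 / 3 * k * √n := by
  have htel := sum_div_sqrt_sub_le_sub hk
  have hr : √((n : ℝ) - k) ≤ √n := Real.sqrt_le_sqrt (by linarith [k.cast_nonneg (α := ℝ)])
  have hs2 : √(n : ℝ) ^ 2 = n := Real.sq_sqrt n.cast_nonneg
  have hr2 : √((n : ℝ) - k) ^ 2 = n - k := Real.sq_sqrt (sub_nonneg.2 (Nat.cast_le.2 hk))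
  set s := √(n : ℝ)
  set r := √((n : ℝ) - k)
  have hr0 : 0 ≤ r := Real.sqrt_nonneg _
  have hk2 : (k : ℝ) = s ^ 2 - r ^ 2 := by linarith
  have hfinal : 0 ≤ r * ((s - r) * (3 * s + r)) :=
    mul_nonneg hr0 (mul_nonneg (sub_nonneg.2 hr) (by linarith))
  rw [hk2, ← hs2]
  rw [← hs2] at htel
  linear_combination htel + 2 / 3 * hfinal

theorem add_sq_add_mul_sqrt_le {B γ : ℝ} (hγ : 0 ≤ γ) (hγB : γ ≤ B) :
    (B + γ) ^ 2 + 8.3 * (B * √(B ^ 2 - γ ^ 2)) ≤ (3.1 * B) ^ 2 := by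
  have hy : √(B ^ 2 - γ ^ 2) ^ 2 = B ^ 2 - γ ^ 2 := Real.sq_sqrt (by nlinarith)
  have hsqrt : 8.3 * (B * √(B ^ 2 - γ ^ 2)) ≤ 4.35 * √(B ^ 2 - γ ^ 2) ^ 2 + 3.96 * B ^ 2 := by
    linarith [sq_nonneg (8.7 * √(B ^ 2 - γ ^ 2) - 8.3 * B), sq_nonneg B]
  have hcross : 2 * (B * γ) ≤ 3.35 * γ ^ 2 + 0.3 * B ^ 2 := by
    linarith [sq_nonneg (3.35 * γ - B), sq_nonneg B]
  rw [hy] at hsqrt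
  linarith

variable {E : Type*} [NormedAddCommGroup E] [InnerProductSpace ℝ E] {n k : ℕ} [NeZero n]
  {T : Fin n → E → Set E} {B : ℝ} {c : E} {gs : Fin n → E} {g : Equiv.Perm (Fin n) → ℕ → E}

namespace IsBoundedDissipative

theorem expect_inner_centredSum_le (hT : IsBoundedDissipative T B)
    (h : IsMeanFixedPoint T c gs) (hdet : DeterminedBefore k fun σ => centredSum c (g σ) k)
    {D : ℝ} (hD : 0 ≤ D) (hk : k < n) (hQ : 𝔼 σ, ‖centredSum c (g σ) k‖ ^ 2 ≤ k * D ^ 2) :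
    √((n : ℝ) - 1) * 𝔼 σ, ⟪centredSum c (g σ) k, gs (visit σ k) - c⟫_ℝ
      ≤ D * √(B ^ 2 - ‖c‖ ^ 2) * (k / √((n : ℝ) - k)) := by
  have hnk : (0 : ℝ) < n - k := sub_pos.2 (Nat.cast_lt.2 hk)
  have hpath : √(𝔼 σ, ‖centredSum c (g σ) k‖ ^ 2) ≤ √k * D := by
    rw [← Real.sqrt_sq hD, ← Real.sqrt_mul k.cast_nonneg]
    exact Real.sqrt_le_sqrt hQ
  have hvisit := h.sqrt_mul_sqrt_expect_sq_norm_visitSum_le hT hk.le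
  rw [Real.sqrt_mul k.cast_nonneg] at hvisit
  have hinner := abs_expect_inner_le Finset.univ (fun σ => centredSum c (g σ) k)
    (fun σ => visitSum (fun i => gs i - c) σ k)
  have hswap := hdet.expect_inner_visit h.sum_sub_eq_zero hk
  refine le_of_mul_le_mul_left ?_ hnk
  calc ((n : ℝ) - k) * (√((n : ℝ) - 1)
          * 𝔼 σ, ⟪centredSum c (g σ) k, gs (visit σ k) - c⟫_ℝ)
      = √((n : ℝ) - 1)
          * -𝔼 σ, ⟪centredSum c (g σ) k, visitSum (fun i => gs i - c) σ k⟫_ℝ := by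
        rw [← hswap]; ring
    _ ≤ √((n : ℝ) - 1)
          * ((√k * D) * √(𝔼 σ, ‖visitSum (fun i => gs i - c) σ k‖ ^ 2)) := by
        gcongr
        exact (neg_le_abs _).trans (hinner.trans (by gcongr))
    _ ≤ (√k * D) * (√k * √((n : ℝ) - k) * √(B ^ 2 - ‖c‖ ^ 2)) := by
        rw [mul_left_comm]
        gcongr
    _ = ((n : ℝ) - k) * (D * √(B ^ 2 - ‖c‖ ^ 2) * (k / √((n : ℝ) - k))) := by
        have hk2 : √(k : ℝ) * √k = k := Real.mul_self_sqrt k.cast_nonneg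
        have hs : √((n : ℝ) - k) = (n - k) / √((n : ℝ) - k) := Real.div_sqrt.symm
        linear_combination D * √((n : ℝ) - k) * √(B ^ 2 - ‖c‖ ^ 2) * hk2
          + D * k * √(B ^ 2 - ‖c‖ ^ 2) * hs

theorem sqrt_mul_expect_sq_norm_centredSum_le (hT : IsBoundedDissipative T B)
    (h : IsMeanFixedPoint T c gs) (hg : ∀ σ, IsAveragedPath T n (visit σ) (g σ))
    (hdet : ∀ j, DeterminedBefore j fun σ => centredSum c (g σ) j) {D : ℝ} (hD : 0 ≤ D)
    (hk : k ≤ n) (hQ : ∀ j < k, 𝔼 σ, ‖centredSum c (g σ) j‖ ^ 2 ≤ j * D ^ 2) :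
    √((n : ℝ) - 1) * 𝔼 σ, ‖centredSum c (g σ) k‖ ^ 2
      ≤ k * (√((n : ℝ) - 1) * (B + ‖c‖) ^ 2 + 8 / 3 * √n * (D * √(B ^ 2 - ‖c‖ ^ 2))) := by
  have hcross : √((n : ℝ) - 1) * ∑ j ∈ Finset.range k,
      𝔼 σ, ⟪centredSum c (g σ) j, gs (visit σ j) - c⟫_ℝ
        ≤ D * √(B ^ 2 - ‖c‖ ^ 2) * (4 / 3 * k * √n) := by
    calc _ ≤ ∑ j ∈ Finset.range k, D * √(B ^ 2 - ‖c‖ ^ 2) * (j / √((n : ℝ) - j)) := by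
          rw [Finset.mul_sum]
          refine Finset.sum_le_sum fun j hj => ?_
          have hjk := Finset.mem_range.1 hj
          exact hT.expect_inner_centredSum_le h (hdet j) hD (hjk.trans_le hk) (hQ j hjk)
      _ ≤ _ := by
          rw [← Finset.mul_sum]
          gcongr
          exact sum_div_sqrt_sub_le hk
  have henergy := mul_le_mul_of_nonneg_left (hT.expect_sq_norm_centredSum_le h.mem hg hk)
    (Real.sqrt_nonneg ((n : ℝ) - 1))
  linarith

/-- The constant `3.1` reproduces itself in the induction: the cross term has the coefficient
`8 / 3 · √(n / (n - 1)) · 3.1 ≤ 8.3` as soon as `256 ≤ n`. -/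
theorem expect_sq_norm_centredSum_le_of_determinedBefore (hT : IsBoundedDissipative T B)
    (h : IsMeanFixedPoint T c gs) (hg : ∀ σ, IsAveragedPath T n (visit σ) (g σ))
    (hdet : ∀ j, DeterminedBefore j fun σ => centredSum c (g σ) j) (hn : 256 ≤ n) (hk : k ≤ n) :
    𝔼 σ, ‖centredSum c (g σ) k‖ ^ 2 ≤ k * (3.1 * B) ^ 2 := by
  have hγ : ‖c‖ ≤ B := h.norm_le hT
  have hB : 0 ≤ B := (norm_nonneg c).trans hγ
  have hn' : (256 : ℝ) ≤ n := by exact_mod_cast hn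
  have hs : 0 < √((n : ℝ) - 1) := Real.sqrt_pos.2 (by linarith)
  have hsqrt : √(n : ℝ) ≤ 1.002 * √((n : ℝ) - 1) :=
    Real.sqrt_le_iff.2 ⟨by positivity, by
      rw [mul_pow, Real.sq_sqrt (by linarith)]; linarith⟩
  induction k using Nat.strong_induction_on with
  | _ k ih =>
    refine le_of_mul_le_mul_left ((hT.sqrt_mul_expect_sq_norm_centredSum_le h hg hdet
      (D := 3.1 * B) (by positivity) hk fun j hj => ih j hj (hj.le.trans hk)).trans ?_) hs
    calc _ ≤ k * (√((n : ℝ) - 1) * (B + ‖c‖) ^ 2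
          + 8 / 3 * (1.002 * √((n : ℝ) - 1)) * (3.1 * B * √(B ^ 2 - ‖c‖ ^ 2))) := by gcongr
      _ ≤ √((n : ℝ) - 1) * (k * ((B + ‖c‖) ^ 2 + 8.3 * (B * √(B ^ 2 - ‖c‖ ^ 2)))) := by
          have : 0 ≤ √((n : ℝ) - 1) * k * (B * √(B ^ 2 - ‖c‖ ^ 2)) := by positivity
          linarith
      _ ≤ _ := by
          gcongr
          exact add_sq_add_mul_sqrt_le (norm_nonneg c) hγ

end IsBoundedDissipative

end PredictablePaths

section Comparison

open scoped BigOperators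

theorem le_six_mul_log {t : ℝ} (ht : √2 ≤ t) (ht' : t ≤ 16) : t ≤ 6 * log t := by
  have hlog2 := Real.log_two_gt_d9
  have h2 : (0 : ℝ) < √2 := by positivity
  have hconc : ConcaveOn ℝ (Set.Ioi 0) fun t : ℝ => 6 * log t - t :=
    (strictConcaveOn_log_Ioi.concaveOn.smul (by norm_num : (0 : ℝ) ≤ 6)).sub
      (convexOn_id (convex_Ioi 0))
  have hleft : 0 ≤ 6 * log √2 - √2 := by
    rw [Real.log_sqrt zero_le_two]
    have : √2 ≤ 1.5 := Real.sqrt_le_iff.2 (by norm_num)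
    linarith
  have hright : 0 ≤ 6 * log 16 - 16 := by
    rw [show (16 : ℝ) = 2 ^ 4 by norm_num, Real.log_pow]
    norm_num
    linarith
  have hmin :=
    hconc.min_le_of_mem_Icc (x := √2) (y := 16) h2 (by norm_num : (0 : ℝ) < 16) ⟨ht, ht'⟩
  exact sub_nonneg.1 ((le_min hleft hright).trans hmin)

theorem sqrt_sub_one_le_three_mul_log {n : ℕ} (hn : 1 ≤ n) (hn' : n ≤ 256) :
    √((n : ℝ) - 1) ≤ 3 * log n := by
  rcases hn.eq_or_lt with rfl | h2
  · simp
  have h2' : (2 : ℝ) ≤ n := by exact_mod_cast h2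
  have h256 : (n : ℝ) ≤ 16 ^ 2 := by norm_num; exact_mod_cast hn'
  calc √((n : ℝ) - 1) ≤ √n := Real.sqrt_le_sqrt (by linarith)
    _ ≤ 6 * log √n :=
        le_six_mul_log (Real.sqrt_le_sqrt h2') (Real.sqrt_le_iff.2 ⟨by norm_num, h256⟩)
    _ = 3 * log n := by rw [Real.log_sqrt n.cast_nonneg]; ring

theorem le_log_of_256_le {x : ℝ} (hx : 256 ≤ x) : 5.54 ≤ log x := by
  have hlog := Real.log_le_log (by norm_num) hx
  rw [show (256 : ℝ) = 2 ^ 8 by norm_num, Real.log_pow] at hlog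
  push_cast at hlog
  linarith [Real.log_two_gt_d9]

theorem sq_norm_le_mul_add_sq_norm_sub {E : Type*} [SeminormedAddCommGroup E] {p q : ℝ}
    (hp : 0 < p) (hq : 0 < q) (x y : E) :
    ‖x‖ ^ 2 ≤ (p + q) * (‖y‖ ^ 2 / p + ‖x - y‖ ^ 2 / q) := by
  have hcauchy : (‖y‖ + ‖x - y‖) ^ 2 / (p + q) ≤ ‖y‖ ^ 2 / p + ‖x - y‖ ^ 2 / q := by
    simpa [Fin.forall_fin_two, hp, hq] using Finset.sq_sum_div_le_sum_sq_div
      Finset.univ ![‖y‖, ‖x - y‖] (g := ![p, q])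
  calc ‖x‖ ^ 2 ≤ (‖y‖ + ‖x - y‖) ^ 2 := by gcongr; exact norm_le_insert' x y
    _ ≤ (p + q) * (‖y‖ ^ 2 / p + ‖x - y‖ ^ 2 / q) := (div_le_iff₀' (by positivity)).1 hcauchy

variable {E : Type*} [NormedAddCommGroup E] [InnerProductSpace ℝ E]

/-- Sum of the first `k` values of the path in the order `s` that evaluates the selection `sel` at
the average of the values collected so far; the values themselves are its increments. -/
def selectionSum {ι : Type*} (sel : ι → E → E) (s : ℕ → ι) : ℕ → E
  | 0 => 0
  | k + 1 => selectionSum sel s k + sel (s k) ((k : ℝ)⁻¹ • selectionSum sel s k)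

variable {n : ℕ} [NeZero n] {T : Fin n → E → Set E} {B : ℝ} {c : E} {gs : Fin n → E}
  {g : Equiv.Perm (Fin n) → ℕ → E}

theorem determinedBefore_selectionSum (sel : Fin n → E → E) (k : ℕ) :
    DeterminedBefore k fun σ => selectionSum sel (visit σ) k := by
  intro σ τ h
  induction k with
  | zero => rfl
  | succ k ih =>
    have ih := ih fun i hi => h i (hi.trans k.lt_succ_self)
    simp only [selectionSum, h k k.lt_succ_self, ih]

theorem exists_isAveragedPath_determinedBefore (hT : ∀ i v, (T i v).Nonempty) (c : E) :
    ∃ g : Equiv.Perm (Fin n) → ℕ → E, (∀ σ, IsAveragedPath T n (visit σ) (g σ)) ∧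
      ∀ k, DeterminedBefore k fun σ => centredSum c (g σ) k := by
  choose sel hsel using hT
  let g (σ : Equiv.Perm (Fin n)) (k : ℕ) : E :=
    sel (visit σ k) ((k : ℝ)⁻¹ • selectionSum sel (visit σ) k)
  have hsum (σ : Equiv.Perm (Fin n)) (k : ℕ) :
      ∑ i ∈ Finset.range k, g σ i = selectionSum sel (visit σ) k := by
    induction k with
    | zero => rfl
    | succ k ih => rw [Finset.sum_range_succ, ih, selectionSum]
  refine ⟨g, fun σ k _ => ?_, fun k σ τ h => ?_⟩
  · rw [hsum]
    exact hsel _ _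
  · simp only [centredSum, Finset.sum_sub_distrib, hsum, determinedBefore_selectionSum sel k h]

namespace IsBoundedDissipative

theorem expect_sq_norm_centredSum_self_le_of_256_le (hT : IsBoundedDissipative T B)
    (htotal : ∀ i v, (T i v).Nonempty) (h : IsMeanFixedPoint T c gs)
    (hg : ∀ σ, IsAveragedPath T n (visit σ) (g σ)) (hn : 256 ≤ n) :
    𝔼 σ, ‖centredSum c (g σ) n‖ ^ 2 ≤ n * (5.1 * B) ^ 2 := by
  obtain ⟨g', hg', hdet⟩ := exists_isAveragedPath_determinedBefore htotal c
  have hpred := hT.expect_sq_norm_centredSum_le_of_determinedBefore h hg' hdet hn le_rfl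
  -- `5.1 = 3.1 + 2`, hence the optimal Cauchy-Schwarz weights `31` and `20`
  calc 𝔼 σ, ‖centredSum c (g σ) n‖ ^ 2
      ≤ 𝔼 σ, (31 + 20) * (‖centredSum c (g' σ) n‖ ^ 2 / 31 + n * (2 * B) ^ 2 / 20) := by
        refine Finset.expect_le_expect fun σ _ => (sq_norm_le_mul_add_sq_norm_sub
          (p := 31) (q := 20) (by norm_num) (by norm_num) _ (centredSum c (g' σ) n)).trans ?_
        gcongr
        exact hT.sq_norm_centredSum_sub_le (hg σ) (hg' σ) le_rfl
    _ = (31 + 20) * ((𝔼 σ, ‖centredSum c (g' σ) n‖ ^ 2) / 31 + n * (2 * B) ^ 2 / 20) := by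
        rw [← Finset.mul_expect, Finset.expect_add_distrib, Fintype.expect_const,
          Finset.expect_div]
    _ ≤ n * (5.1 * B) ^ 2 := by linarith

/-- Long paths are compared with a predictable one; for short paths the direct bound, of order
`n ^ (3 / 2)`, is already good enough. -/
theorem expect_sq_norm_centredSum_self_le_log (hT : IsBoundedDissipative T B)
    (htotal : ∀ i v, (T i v).Nonempty) (h : IsMeanFixedPoint T c gs)
    (hg : ∀ σ, IsAveragedPath T n (visit σ) (g σ)) :
    𝔼 σ, ‖centredSum c (g σ) n‖ ^ 2 ≤ 4 * n * (log n + 1) * B ^ 2 := by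
  rcases le_total n 256 with hn | hn
  · refine (hT.expect_sq_norm_centredSum_self_le h hg).trans ?_
    rw [mul_comm 4 (n : ℝ), mul_assoc (n : ℝ) 4]
    gcongr
    linarith [sqrt_sub_one_le_three_mul_log NeZero.one_le hn]
  · refine (hT.expect_sq_norm_centredSum_self_le_of_256_le htotal h hg hn).trans ?_
    rw [mul_pow, ← mul_assoc, mul_comm 4 (n : ℝ), mul_assoc (n : ℝ) 4]
    gcongr
    linarith [le_log_of_256_le (Nat.ofNat_le_cast.2 hn : (256 : ℝ) ≤ n)]

end IsBoundedDissipative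

end Comparison

section Subgradients

variable {f : ℝ → ℝ} {u v a b L : ℝ}

theorem IsSubgradAt.abs_le (hf : ∀ a b, |f a - f b| ≤ L * |a - b|) (hu : IsSubgradAt f u a) :
    |u| ≤ L := by
  have hright : f (a + 1) - f a ≤ L := by simpa using (le_abs_self _).trans (hf (a + 1) a)
  have hleft : f (a - 1) - f a ≤ L := by simpa using (le_abs_self _).trans (hf (a - 1) a)
  exact _root_.abs_le.2 ⟨by linarith [hu (a - 1)], by linarith [hu (a + 1)]⟩

theorem IsSubgradAt.mul_sub_nonneg (hu : IsSubgradAt f u a) (hv : IsSubgradAt f v b) :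
    0 ≤ (u - v) * (a - b) := by
  linarith [hu b, hv a]

theorem isSubgradAt_of_mem_Icc_derivWithin (hf : ConvexOn ℝ Set.univ f)
    (hu : u ∈ Set.Icc (derivWithin f (Set.Iio a) a) (derivWithin f (Set.Ioi a) a)) :
    IsSubgradAt f u a := by
  intro b
  rcases lt_trichotomy a b with hab | rfl | hab
  · have hslope := hu.2.trans
      (hf.rightDeriv_le_slope_of_mem_interior (by simp) (Set.mem_univ b) hab)
    rw [slope_def_field, le_div_iff₀ (by linarith)] at hslope
    linarith
  · simp
  · have hslope := (hf.slope_le_leftDeriv_of_mem_interior (Set.mem_univ b) (by simp) hab).trans hu.1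
    rw [slope_def_field, div_le_iff₀ (by linarith)] at hslope
    linarith

theorem leftDeriv_le_rightDeriv (hf : ConvexOn ℝ Set.univ f) (a : ℝ) :
    derivWithin f (Set.Iio a) a ≤ derivWithin f (Set.Ioi a) a :=
  hf.leftDeriv_le_rightDeriv_of_mem_interior (by simp)

theorem exists_isSubgradAt (hf : ConvexOn ℝ Set.univ f) (a : ℝ) : ∃ u, IsSubgradAt f u a :=
  ⟨_, isSubgradAt_of_mem_Icc_derivWithin hf (Set.left_mem_Icc.2 (leftDeriv_le_rightDeriv hf a))⟩

theorem hasDerivWithinAt_add_mul (a b : ℝ) (s : Set ℝ) :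
    HasDerivWithinAt (fun t => a + t * b) b s 0 := by
  simpa using (((hasDerivAt_id (0 : ℝ)).mul_const b).const_add a).hasDerivWithinAt

theorem exists_hasDerivWithinAt_add_mul (hf : ConvexOn ℝ Set.univ f) (a b : ℝ) :
    ∃ u ∈ Set.Icc (derivWithin f (Set.Iio a) a) (derivWithin f (Set.Ioi a) a),
      HasDerivWithinAt (fun t => f (a + t * b)) (u * b) (Set.Ioi 0) 0 := by
  have hle := leftDeriv_le_rightDeriv hf a
  have hcomp {u : ℝ} {s : Set ℝ} (hu : HasDerivWithinAt f u s a)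
      (hs : ∀ t ∈ Set.Ioi (0 : ℝ), a + t * b ∈ s) :
      HasDerivWithinAt (fun t => f (a + t * b)) (u * b) (Set.Ioi 0) 0 :=
    hu.comp_of_eq 0 (hasDerivWithinAt_add_mul a b _) hs (by simp)
  rcases lt_trichotomy b 0 with hb | rfl | hb
  · exact ⟨_, Set.left_mem_Icc.2 hle,
      hcomp (hf.hasDerivWithinAt_leftDeriv_of_mem_interior (by simp))
        fun t (ht : 0 < t) => by simpa using mul_neg_of_pos_of_neg ht hb⟩
  · exact ⟨_, Set.left_mem_Icc.2 hle, by simpa using hasDerivWithinAt_const (0 : ℝ) _ (f a)⟩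
  · exact ⟨_, Set.right_mem_Icc.2 hle,
      hcomp (hf.hasDerivWithinAt_rightDeriv_of_mem_interior (by simp))
        fun t (ht : 0 < t) => by simpa using mul_pos ht hb⟩

end Subgradients

section BiasedERM

theorem nonneg_of_hasDerivWithinAt_of_forall_le {f : ℝ → ℝ} {f' a : ℝ}
    (hf : HasDerivWithinAt f f' (Set.Ioi a) a) (hmin : ∀ b, f a ≤ f b) : 0 ≤ f' := by
  have hmin' : IsLocalMinOn f (Set.Ioi a) a := .of_forall fun b => hmin b
  simpa using hmin'.hasFDerivWithinAt_nonneg hf.hasFDerivWithinAt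
    (one_mem_posTangentConeAt_iff_mem_closure.2 (by simp))

variable {E ι : Type*} [NormedAddCommGroup E] [InnerProductSpace ℝ E] [Fintype ι]
  {x : ι → E} {f : ι → ℝ → ℝ} {lam : ℝ} {h w : E}

/-- The biased regularized empirical risk of the features `xᵢ` with losses `fᵢ`, where `fᵢ` stands
for `ℓ(·, yᵢ)`; `lam` is the regularization parameter and `h` the bias. -/
def biasedRisk (x : ι → E) (f : ι → ℝ → ℝ) (lam : ℝ) (h w : E) : ℝ :=
  (Fintype.card ι : ℝ)⁻¹ * ∑ i, f i ⟪x i, w⟫_ℝ + lam / 2 * ‖w - h‖ ^ 2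

theorem exists_hasDerivWithinAt_biasedRisk (hf : ∀ i, ConvexOn ℝ Set.univ (f i)) (v : E) :
    ∃ u : ι → ℝ, (∀ i, u i ∈ Set.Icc (derivWithin (f i) (Set.Iio ⟪x i, w⟫_ℝ) ⟪x i, w⟫_ℝ)
        (derivWithin (f i) (Set.Ioi ⟪x i, w⟫_ℝ) ⟪x i, w⟫_ℝ)) ∧
      HasDerivWithinAt (fun t : ℝ => biasedRisk x f lam h (w + t • v))
        (⟪(Fintype.card ι : ℝ)⁻¹ • ∑ i, u i • x i + lam • (w - h), v⟫_ℝ) (Set.Ioi 0) 0 := by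
  choose u hu hder using fun i =>
    exists_hasDerivWithinAt_add_mul (hf i) ⟪x i, w⟫_ℝ ⟪x i, v⟫_ℝ
  refine ⟨u, hu, ?_⟩
  have hpen : HasDerivWithinAt (fun t : ℝ => lam / 2 * ‖w + t • v - h‖ ^ 2)
      (lam * ⟪w - h, v⟫_ℝ) (Set.Ioi 0) 0 := by
    have hline : HasDerivAt (fun t : ℝ => w + t • v - h) v 0 := by
      simpa using (((hasDerivAt_id (0 : ℝ)).smul_const v).const_add w).sub_const h
    refine ((hline.norm_sq.const_mul (lam / 2)).congr_deriv ?_).hasDerivWithinAt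
    rw [zero_smul, add_zero]
    ring
  have hsum : HasDerivWithinAt (fun t : ℝ => ∑ i, f i ⟪x i, w + t • v⟫_ℝ)
      (∑ i, u i * ⟪x i, v⟫_ℝ) (Set.Ioi 0) 0 := by
    simpa only [inner_add_right, inner_smul_right] using
      HasDerivWithinAt.fun_sum fun i (_ : i ∈ Finset.univ) => hder i
  refine ((hsum.const_mul (Fintype.card ι : ℝ)⁻¹).add hpen).congr_deriv ?_
  simp only [inner_add_left, real_inner_smul_left, sum_inner]

theorem mem_of_forall_exists_inner_sub_nonneg {K : Set E} (hK : IsComplete K) (hconv : Convex ℝ K)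
    {p : E} (hp : ∀ v, ∃ q ∈ K, 0 ≤ ⟪q - p, v⟫_ℝ) : p ∈ K := by
  obtain ⟨q₀, hq₀, -⟩ := hp 0
  obtain ⟨q₁, hq₁, hmin⟩ := exists_norm_eq_iInf_of_complete_convex ⟨q₀, hq₀⟩ hK hconv p
  have hproj := (norm_eq_iInf_iff_real_inner_le_zero hconv hq₁).1 hmin
  obtain ⟨q, hq, hpq⟩ := hp (p - q₁)
  have hsplit : ⟪q - p, p - q₁⟫_ℝ = ⟪p - q₁, q - q₁⟫_ℝ - ‖p - q₁‖ ^ 2 := by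
    rw [← real_inner_self_eq_norm_sq, ← inner_sub_right, sub_sub_sub_cancel_right,
      real_inner_comm]
  have hzero : ‖p - q₁‖ ^ 2 = 0 := le_antisymm (by linarith [hproj q hq]) (sq_nonneg _)
  rwa [sub_eq_zero.1 (norm_eq_zero.1 (pow_eq_zero_iff two_ne_zero |>.1 hzero))]

/-- At a minimizer no directional derivative is negative, so no direction separates `lam • (h - w)`
from the compact convex set of means of subgradients. -/
theorem exists_isSubgradAt_inv_card_smul_sum_eq (hf : ∀ i, ConvexOn ℝ Set.univ (f i))
    (hw : ∀ w', biasedRisk x f lam h w ≤ biasedRisk x f lam h w') :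
    ∃ u : ι → ℝ, (∀ i, IsSubgradAt (f i) (u i) ⟪x i, w⟫_ℝ) ∧
      (Fintype.card ι : ℝ)⁻¹ • ∑ i, u i • x i = lam • (h - w) := by
  let lo (i : ι) : ℝ := derivWithin (f i) (Set.Iio ⟪x i, w⟫_ℝ) ⟪x i, w⟫_ℝ
  let hi (i : ι) : ℝ := derivWithin (f i) (Set.Ioi ⟪x i, w⟫_ℝ) ⟪x i, w⟫_ℝ
  let A : (ι → ℝ) →ₗ[ℝ] E := (Fintype.card ι : ℝ)⁻¹ • Fintype.linearCombination ℝ x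
  have hA (u : ι → ℝ) : A u = (Fintype.card ι : ℝ)⁻¹ • ∑ i, u i • x i := rfl
  have hmem : lam • (h - w) ∈ A '' Set.Icc lo hi := by
    refine mem_of_forall_exists_inner_sub_nonneg
      (isCompact_Icc.image A.continuous_of_finiteDimensional).isComplete
      ((convex_Icc lo hi).linear_image A) fun v => ?_
    obtain ⟨u, hu, hder⟩ := exists_hasDerivWithinAt_biasedRisk (lam := lam) (h := h) hf v
    refine ⟨A u, ⟨u, ⟨fun i => (hu i).1, fun i => (hu i).2⟩, rfl⟩, ?_⟩
    rw [hA, sub_eq_add_neg, ← smul_neg, neg_sub]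
    exact nonneg_of_hasDerivWithinAt_of_forall_le hder fun t => by
      simpa only [zero_smul, add_zero] using hw (w + t • v)
  obtain ⟨u, hu, hsum⟩ := hmem
  exact ⟨u, fun i => isSubgradAt_of_mem_Icc_derivWithin (hf i) ⟨hu.1 i, hu.2 i⟩, hsum⟩

theorem biasedRisk_comp_perm (σ : Equiv.Perm ι) :
    biasedRisk (x ∘ σ) (f ∘ σ) lam h w = biasedRisk x f lam h w := by
  simp only [biasedRisk, Function.comp_apply, Equiv.sum_comp σ fun i => f i ⟪x i, w⟫_ℝ]

end BiasedERM

section StochasticSubgradients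

variable {E ι : Type*} [NormedAddCommGroup E] [InnerProductSpace ℝ E]
  {x : ι → E} {f : ι → ℝ → ℝ} {L R lam : ℝ} {h w w' : E}

/-- The subdifferential of the `i`-th summand `w ↦ fᵢ ⟪xᵢ, w⟫` of the empirical risk, in the
coordinate `v = λ (h - w)` in which subgradient descent becomes an averaging procedure. -/
def stochasticSubgrad (x : ι → E) (f : ι → ℝ → ℝ) (lam : ℝ) (h : E) (i : ι) (v : E) : Set E :=
  {g | ∃ u, IsSubgradAt (f i) u ⟪x i, h - lam⁻¹ • v⟫_ℝ ∧ u • x i = g}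

theorem isBoundedDissipative_stochasticSubgrad (hlam : 0 < lam) (hR : ∀ i, ‖x i‖ ≤ R)
    (hf : ∀ i a b, |f i a - f i b| ≤ L * |a - b|) :
    IsBoundedDissipative (stochasticSubgrad x f lam h) (L * R) where
  inner_nonpos := by
    rintro i v v' _ _ ⟨u, hu, rfl⟩ ⟨u', hu', rfl⟩
    have hmono := hu.mul_sub_nonneg hu'
    rw [← inner_sub_right, sub_sub_sub_cancel_left, ← smul_sub, inner_smul_right,
      ← neg_sub v v', inner_neg_right, mul_left_comm, mul_neg] at hmono
    rw [← sub_smul, real_inner_smul_left]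
    exact neg_nonneg.1 (nonneg_of_mul_nonneg_right hmono (inv_pos.2 hlam))
  norm_le := by
    rintro i v _ ⟨u, hu, rfl⟩
    rw [norm_smul]
    exact mul_le_mul (hu.abs_le (hf i)) (hR i) (norm_nonneg _)
      ((abs_nonneg u).trans (hu.abs_le (hf i)))

theorem stochasticSubgrad_nonempty (hf : ∀ i, ConvexOn ℝ Set.univ (f i)) (i : ι) (v : E) :
    (stochasticSubgrad x f lam h i v).Nonempty :=
  let ⟨u, hu⟩ := exists_isSubgradAt (hf i) _
  ⟨_, u, hu, rfl⟩

variable [Fintype ι] [Nonempty ι]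

theorem exists_isMeanFixedPoint_stochasticSubgrad (hlam : lam ≠ 0)
    (hf : ∀ i, ConvexOn ℝ Set.univ (f i))
    (hw : ∀ w', biasedRisk x f lam h w ≤ biasedRisk x f lam h w') :
    ∃ gs, IsMeanFixedPoint (stochasticSubgrad x f lam h) (lam • (h - w)) gs := by
  obtain ⟨u, hu, hmean⟩ := exists_isSubgradAt_inv_card_smul_sum_eq hf hw
  refine ⟨fun i => u i • x i, fun i => ⟨u i, ?_, rfl⟩, ?_⟩
  · rw [inv_smul_smul₀ hlam, sub_sub_cancel]
    exact hu i
  · rw [Finset.sum_sub_distrib, Finset.sum_const, ← hmean, Finset.card_univ,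
      ← Nat.cast_smul_eq_nsmul ℝ, smul_inv_smul₀ (by simp), sub_self]

theorem eq_of_forall_biasedRisk_le (hlam : 0 < lam) (hR : ∀ i, ‖x i‖ ≤ R)
    (hconv : ∀ i, ConvexOn ℝ Set.univ (f i)) (hlip : ∀ i a b, |f i a - f i b| ≤ L * |a - b|)
    (hw : ∀ w₀, biasedRisk x f lam h w ≤ biasedRisk x f lam h w₀)
    (hw' : ∀ w₀, biasedRisk x f lam h w' ≤ biasedRisk x f lam h w₀) : w = w' := by
  obtain ⟨gs, hgs⟩ := exists_isMeanFixedPoint_stochasticSubgrad hlam.ne' hconv hw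
  obtain ⟨gs', hgs'⟩ := exists_isMeanFixedPoint_stochasticSubgrad hlam.ne' hconv hw'
  have heq := hgs.eq (isBoundedDissipative_stochasticSubgrad hlam hR hlip) hgs'
  exact sub_right_injective (smul_right_injective E hlam.ne' heq)

end StochasticSubgradients

section BiasedSGD

open scoped BigOperators

variable {E : Type*} [NormedAddCommGroup E] [InnerProductSpace ℝ E] {n : ℕ}
  {x : Fin n → E} {f : Fin n → ℝ → ℝ} {L R lam : ℝ} {h w : E} {u : Fin n → ℝ} {W : ℕ → E} {k : ℕ}

/-- `W 1, …, W (n + 1)` are the iterates of Algorithm 1 on the features `x` and losses `f`, with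
subgradients `u`. The paper's data point `k` has index `k - 1` in `Fin n`. -/
structure IsBiasedSGD (x : Fin n → E) (f : Fin n → ℝ → ℝ) (lam : ℝ) (h : E) (u : Fin n → ℝ)
    (W : ℕ → E) : Prop where
  one_eq : W 1 = h
  isSubgradAt : ∀ k : Fin n, IsSubgradAt (f k) (u k) ⟪x k, W (k.1 + 1)⟫_ℝ
  add_two_eq : ∀ k : Fin n, W (k.1 + 2) = W (k.1 + 1)
    - (((k.1 + 1 : ℕ) : ℝ) * lam)⁻¹ • (u k • x k + lam • (W (k.1 + 1) - h))

namespace IsBiasedSGD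

variable [NeZero n]

theorem succ_eq (hW : IsBiasedSGD x f lam h u W) (hlam : lam ≠ 0) (hk : k ≤ n) :
    W (k + 1) = h - lam⁻¹ • (k : ℝ)⁻¹ •
      ∑ i ∈ Finset.range k, u (Fin.ofNat n i) • x (Fin.ofNat n i) := by
  induction k with
  | zero => simp [hW.one_eq]
  | succ k ih =>
    have hstep := hW.add_two_eq (Fin.ofNat n k)
    rw [Fin.val_ofNat, Nat.mod_eq_of_lt hk, ih (by omega)] at hstep
    rw [hstep, Finset.sum_range_succ]
    rcases Nat.eq_zero_or_pos k with rfl | hk0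
    · simp
    have hk' : (k : ℝ) ≠ 0 := by positivity
    have hk1 : (k : ℝ) + 1 ≠ 0 := by positivity
    generalize ∑ i ∈ Finset.range k, u (Fin.ofNat n i) • x (Fin.ofNat n i) = G
    generalize u (Fin.ofNat n k) • x (Fin.ofNat n k) = e
    push_cast
    match_scalars <;> field_simp <;> ring

theorem isAveragedPath {σ : Equiv.Perm (Fin n)} (hW : IsBiasedSGD (x ∘ σ) (f ∘ σ) lam h u W)
    (hlam : lam ≠ 0) : IsAveragedPath (stochasticSubgrad x f lam h) n (visit σ)
      fun i => u (Fin.ofNat n i) • x (visit σ i) := by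
  intro k hk
  have hiter : W (k + 1) = h - lam⁻¹ • (k : ℝ)⁻¹ •
      ∑ i ∈ Finset.range k, u (Fin.ofNat n i) • x (visit σ i) := hW.succ_eq hlam hk.le
  refine ⟨u (Fin.ofNat n k), ?_, rfl⟩
  have hsub := hW.isSubgradAt (Fin.ofNat n k)
  rwa [Fin.val_ofNat, Nat.mod_eq_of_lt hk, hiter] at hsub

theorem norm_discrepancy_eq (hW : IsBiasedSGD x f lam h u W) (hlam : lam ≠ 0) (w : E) :
    ‖(-lam) • (w - h) - (-lam) • (W (n + 1) - h)‖ = (n : ℝ)⁻¹ *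
      ‖centredSum (lam • (h - w)) (fun i => u (Fin.ofNat n i) • x (Fin.ofNat n i)) n‖ := by
  rw [hW.succ_eq hlam le_rfl, centredSum_eq_smul, norm_smul, Real.norm_natCast,
    inv_mul_cancel_left₀ (NeZero.ne _), ← norm_neg]
  congr 1
  match_scalars <;> field_simp
  ring

end IsBiasedSGD

theorem expect_sq_norm_discrepancy_le (hn : 1 ≤ n) (hlam : 0 < lam) (hR : ∀ i, ‖x i‖ ≤ R)
    (hconv : ∀ i, ConvexOn ℝ Set.univ (f i)) (hlip : ∀ i a b, |f i a - f i b| ≤ L * |a - b|)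
    (hw : ∀ w', biasedRisk x f lam h w ≤ biasedRisk x f lam h w')
    {u : Equiv.Perm (Fin n) → Fin n → ℝ} {W : Equiv.Perm (Fin n) → ℕ → E}
    (hW : ∀ σ : Equiv.Perm (Fin n), IsBiasedSGD (x ∘ σ) (f ∘ σ) lam h (u σ) (W σ)) :
    𝔼 σ, ‖(-lam) • (w - h) - (-lam) • (W σ (n + 1) - h)‖ ^ 2
      ≤ 4 * R ^ 2 * L ^ 2 * (log n + 1) / n := by
  have : NeZero n := ⟨by omega⟩
  obtain ⟨gs, hgs⟩ := exists_isMeanFixedPoint_stochasticSubgrad hlam.ne' hconv hw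
  have hT := isBoundedDissipative_stochasticSubgrad (h := h) hlam hR hlip
  have hmain := hT.expect_sq_norm_centredSum_self_le_log (stochasticSubgrad_nonempty hconv) hgs
    fun σ => (hW σ).isAveragedPath hlam.ne'
  simp only [(hW _).norm_discrepancy_eq hlam.ne', mul_pow, ← Finset.mul_expect]
  rw [inv_pow, inv_mul_le_iff₀ (by have := NeZero.pos n; positivity)]
  refine hmain.trans_eq ?_
  field_simp

end BiasedSGD

section Symmetrization

open scoped BigOperators

theorem sum_lintegral_le_lintegral_sum {α ι : Type*} [MeasurableSpace α] (μ : Measure α)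
    (s : Finset ι) (f : ι → α → ENNReal) :
    ∑ i ∈ s, ∫⁻ a, f i a ∂μ ≤ ∫⁻ a, ∑ i ∈ s, f i a ∂μ := by
  classical
  induction s using Finset.induction_on with
  | empty => simp
  | insert i s hi ih =>
    simp only [Finset.sum_insert hi]
    exact (add_le_add_right ih _).trans (le_lintegral_add _ _)

theorem lintegral_pi_comp_perm {ι X : Type*} [Fintype ι] [MeasurableSpace X] (μ : Measure X)
    [SigmaFinite μ] (f : (ι → X) → ENNReal) (σ : Equiv.Perm ι) :
    ∫⁻ S, f (S ∘ σ) ∂(Measure.pi fun _ : ι => μ) = ∫⁻ S, f S ∂(Measure.pi fun _ : ι => μ) :=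
  (measurePreserving_arrowCongr' (fun _ => μ) (fun _ => μ) σ.symm (.refl X)
    fun _ => .id μ).lintegral_comp_emb (MeasurableEquiv.measurableEmbedding _) f

theorem lintegral_pi_ofReal_le_of_expect_perm_le {ι X : Type*} [Fintype ι] [DecidableEq ι]
    [MeasurableSpace X] (μ : Measure X) [IsProbabilityMeasure μ] {f : (ι → X) → ℝ}
    (hf : ∀ S, 0 ≤ f S) {C : ℝ}
    (hC : ∀ᵐ S ∂(Measure.pi fun _ : ι => μ), 𝔼 σ : Equiv.Perm ι, f (S ∘ σ) ≤ C) :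
    ∫⁻ S, ENNReal.ofReal (f S) ∂(Measure.pi fun _ : ι => μ) ≤ ENNReal.ofReal C := by
  let N := Fintype.card (Equiv.Perm ι)
  have hsum : ∀ᵐ S ∂(Measure.pi fun _ : ι => μ),
      ∑ σ : Equiv.Perm ι, ENNReal.ofReal (f (S ∘ σ)) ≤ N * ENNReal.ofReal C := by
    filter_upwards [hC] with S hS
    rw [← ENNReal.ofReal_sum_of_nonneg fun _ _ => hf _, ← Fintype.card_mul_expect,
      ENNReal.ofReal_mul (Nat.cast_nonneg _), ENNReal.ofReal_natCast]
    gcongr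
  have hN : N * ∫⁻ S, ENNReal.ofReal (f S) ∂(Measure.pi fun _ : ι => μ)
      ≤ N * ENNReal.ofReal C := by
    calc N * ∫⁻ S, ENNReal.ofReal (f S) ∂(Measure.pi fun _ : ι => μ)
        = ∑ σ : Equiv.Perm ι,
            ∫⁻ S, ENNReal.ofReal (f (S ∘ σ)) ∂(Measure.pi fun _ : ι => μ) := by
          simp only [lintegral_pi_comp_perm μ fun S => ENNReal.ofReal (f S), Finset.sum_const,
            Finset.card_univ, nsmul_eq_mul, N]
      _ ≤ ∫⁻ S, ∑ σ : Equiv.Perm ι, ENNReal.ofReal (f (S ∘ σ)) ∂(Measure.pi fun _ : ι => μ) :=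
          sum_lintegral_le_lintegral_sum _ _ fun (σ : Equiv.Perm ι) S => ENNReal.ofReal (f (S ∘ σ))
      _ ≤ ∫⁻ _, N * ENNReal.ofReal C ∂(Measure.pi fun _ : ι => μ) := lintegral_mono_ae hsum
      _ = N * ENNReal.ofReal C := by simp
  exact (ENNReal.mul_le_mul_iff_right (by simp [N]) (by simp)).1 hN

theorem ae_pi_forall {ι X : Type*} [Fintype ι] [MeasurableSpace X] {μ : Measure X}
    [SigmaFinite μ] {p : X → Prop} (hp : ∀ᵐ z ∂μ, p z) :
    ∀ᵐ S ∂(Measure.pi fun _ : ι => μ), ∀ i, p (S i) :=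
  ae_all_iff.2 fun i => (Measure.tendsto_eval_ae_ae (μ := fun _ : ι => μ) (i := i)).eventually hp

end Symmetrization

theorem stmt6_general {E Z : Type*} [NormedAddCommGroup E] [InnerProductSpace ℝ E]
    [MeasurableSpace Z] {n : ℕ} (hn : 1 ≤ n) {R L lam : ℝ} (hlam : 0 < lam)
    {x : Z → E} {f : Z → ℝ → ℝ} {μ : Measure Z} [IsProbabilityMeasure μ]
    (hconv : ∀ᵐ z ∂μ, ConvexOn ℝ Set.univ (f z))
    (hlip : ∀ᵐ z ∂μ, ∀ a b, |f z a - f z b| ≤ L * |a - b|) (hR : ∀ᵐ z ∂μ, ‖x z‖ ≤ R)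
    {h : E} {W : (Fin n → Z) → ℕ → E} {u : (Fin n → Z) → Fin n → ℝ}
    (hW : ∀ S, IsBiasedSGD (x ∘ S) (f ∘ S) lam h (u S) (W S)) {erm : (Fin n → Z) → E}
    (herm : ∀ S w, biasedRisk (x ∘ S) (f ∘ S) lam h (erm S) ≤ biasedRisk (x ∘ S) (f ∘ S) lam h w) :
    ∫⁻ S, ENNReal.ofReal (‖(-lam) • (erm S - h) - (-lam) • (W S (n + 1) - h)‖ ^ 2)
        ∂(Measure.pi fun _ : Fin n => μ)
      ≤ ENNReal.ofReal (4 * R ^ 2 * L ^ 2 * (log n + 1) / n) := by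
  have : NeZero n := ⟨by omega⟩
  refine lintegral_pi_ofReal_le_of_expect_perm_le μ (fun _ => sq_nonneg _) ?_
  filter_upwards [ae_pi_forall hconv, ae_pi_forall hlip, ae_pi_forall hR] with S hconv hlip hR
  have herm_perm (σ : Equiv.Perm (Fin n)) : erm (S ∘ σ) = erm S :=
    eq_of_forall_biasedRisk_le (x := x ∘ S) (f := f ∘ S) hlam hR hconv hlip
      (fun w => by simpa only [← Function.comp_assoc, biasedRisk_comp_perm] using herm (S ∘ σ) w)
      (herm S)
  simp only [herm_perm]
  exact expect_sq_norm_discrepancy_le hn hlam hR hconv hlip (herm S) fun σ => hW (S ∘ σ)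

/-- Accuracy of the approximate meta-gradient: the squared discrepancy
`‖Δ_{Z_n}(h)‖² = ‖∇L_{Z_n}(h) - ∇̂L_{Z_n}(h)‖²` between the exact meta-gradient
`-λ(w_h(Z_n) - h)` and its approximation `-λ(w^{(n+1)}_h(Z_n) - h)` satisfies, in
expectation, `E‖Δ‖² ≤ 4R²L²(log n + 1)/n`. -/
theorem stmt6
    (d n : ℕ) (hd : 1 ≤ d) (hn : 1 ≤ n)
    (R L lam : ℝ) (hR : 0 ≤ R) (hL : 0 ≤ L) (hlam : 0 < lam)
    (Y : Set ℝ) (ℓ : ℝ → ℝ → ℝ)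
    (hℓ0 : ∀ a y, y ∈ Y → 0 ≤ ℓ a y)
    (hℓconv : ∀ y ∈ Y, ConvexOn ℝ Set.univ fun a => ℓ a y)
    (hℓlip : ∀ y ∈ Y, ∀ a b, |ℓ a y - ℓ b y| ≤ L * |a - b|)
    (μ : Measure (Pt d)) [IsProbabilityMeasure μ]
    (hμY : ∀ᵐ z ∂μ, z.2 ∈ Y) (hμR : ∀ᵐ z ∂μ, ‖z.1‖ ≤ R)
    (h : Vec d)
    -- Algorithm 1: SGD on the biased regularized risk
    (W : (Fin n → Pt d) → ℕ → Vec d)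
    (u' : (Fin n → Pt d) → Fin n → ℝ)
    (hu'meas : ∀ k, Measurable fun S => u' S k)
    (hW1 : ∀ S, W S 1 = h)
    (hsub : ∀ S (k : Fin n),
      IsSubgradAt (fun a => ℓ a (S k).2) (u' S k) (⟪(S k).1, W S (k.1 + 1)⟫_ℝ))
    (hrec : ∀ S (k : Fin n), W S (k.1 + 2)
      = W S (k.1 + 1) - (((k.1 + 1 : ℕ) : ℝ) * lam)⁻¹ •
          (u' S k • (S k).1 + lam • (W S (k.1 + 1) - h)))
    -- the biased ERM
    (erm : (Fin n → Pt d) → Vec d)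
    (herm : ∀ S w, regRisk ℓ lam S h (erm S) ≤ regRisk ℓ lam S h w) :
    ∫⁻ S, ENNReal.ofReal
        (‖((-lam) • (erm S - h)) - ((-lam) • (W S (n + 1) - h))‖ ^ 2)
        ∂(Measure.pi fun _ : Fin n => μ)
      ≤ ENNReal.ofReal (4 * R ^ 2 * L ^ 2 * (Real.log n + 1) / n) :=
  stmt6_general (x := Prod.fst) (f := fun z a => ℓ a z.2) hn hlam (hμY.mono fun _ => hℓconv _)
    (hμY.mono fun _ => hℓlip _) hμR (fun S => ⟨hW1 S, hsub S, hrec S⟩)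
    fun S w => by simpa [biasedRisk, regRisk, empRisk] using herm S w
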